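/- arXiv:2312.03622 — 2 statements merged into one kernel-verified Lean document; each statement's English description precedes it below -/
import Mathlib

section
/- Let A ⊆ B be an inclusion of (not necessarily unital) C*-algebras, and let A† ⊆ B† denote the induced unital inclusion of their minimal unitizations. Then the following are equivalent: (i) the inclusion A ⊆ B has real rank zero; (ii) for every self-adjoint a ∈ A and every ε > 0 there exists a self-adjoint b ∈ B with finite spectrum (computed in the unitization B†) such that ‖a − b‖ ≤ ε; (iii) for every self-adjoint a ∈ A† and every ε > 0 there exists an invertible self-adjoint b ∈ B† such that ‖a − b‖ ≤ ε; (iv) for all positive x, y ∈ A† with x·y = 0 and every ε > 0 there exists a projection p ∈ B† such that ‖p·x − x‖ ≤ ε and ‖(1−p)·y − y‖ ≤ ε. -/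
open Filter Topology

section Defs

variable {B : Type*} [NonUnitalNormedRing B] [StarRing B] [PartialOrder B]

/-- A projection in a C*-algebra: a self-adjoint idempotent. -/
def IsProjection (p : B) : Prop := star p = p ∧ p * p = p

/-- The hereditary subalgebra `cl(a·S·a)`: the norm closure of `{a * b * a : b ∈ S}`. -/
def herSub (S : Set B) (a : B) : Set B := closure {x : B | ∃ b ∈ S, x = a * b * a}

/-- `T` has an approximate unit of projections. -/
def HasApproxUnitOfProjections (T : Set B) : Prop :=
  ∀ x ∈ T, 0 ≤ x → ∀ ε : ℝ, 0 < ε → ∃ p ∈ T, IsProjection p ∧ ‖p * x - x‖ < ε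

/-- The inclusion `A ⊆ S` of C*-algebras has real rank zero. -/
def InclusionRealRankZero (A S : Set B) : Prop :=
  ∀ a ∈ A, 0 ≤ a → a ≠ 0 → HasApproxUnitOfProjections (herSub S a)

end Defs

section UnitalCStarAlgebra

variable {D : Type*} [CStarAlgebra D]

lemma IsProjection.norm_le_one {p : D} (hp : IsProjection p) : ‖p‖ ≤ 1 := by
  have h := CStarRing.norm_star_mul_self (x := p)
  rw [hp.1, hp.2] at h
  nlinarith [norm_nonneg p]

lemma IsProjection.one_sub {p : D} (hp : IsProjection p) : IsProjection (1 - p) :=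
  ⟨by simp [hp.1], by simp [mul_sub, sub_mul, hp.2]⟩

/-- Functions of `a` vanish on the products prescribed by pointwise vanishing. -/
lemma cfc_mul_one_sub_cfc_eq_zero (a : D) {f g : ℝ → ℝ}
    (hf : Continuous f) (hg : Continuous g) (h : ∀ t, f t * (1 - g t) = 0) :
    cfc f a * (1 - cfc g a) = 0 := by
  rw [mul_sub, mul_one, ← cfc_mul f g a hf.continuousOn hg.continuousOn,
    ← cfc_sub f (fun t ↦ f t * g t) a hf.continuousOn (hf.mul hg).continuousOn]
  rw [show (fun t ↦ f t - f t * g t) = fun _ ↦ (0 : ℝ) from ?_, cfc_const_zero]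
  ext t
  linarith [h t]

/-- A self-adjoint element close to a projection is close to one of its own spectral projections. -/
lemma exists_isProjection_near {d p : D} (hd : IsSelfAdjoint d) (hp : IsProjection p) {δ : ℝ}
    (hδ : δ ≤ 1 / 100) (hdp : ‖d - p‖ ≤ δ) :
    ∃ r g k : D, IsProjection r ∧ r = g * d ∧ r = d * g ∧
      1 - r = (1 - d) * k ∧ ‖r - p‖ ≤ 9 * δ := by
  have hδ0 : 0 ≤ δ := (norm_nonneg _).trans hdp
  have hp1 := hp.norm_le_one
  have hd1 : ‖d‖ ≤ 2 := by
    calc ‖d‖ = ‖(d - p) + p‖ := by simp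
      _ ≤ ‖d - p‖ + ‖p‖ := norm_add_le _ _
      _ ≤ 2 := by linarith
  have hdd : ‖d * d - d‖ ≤ 4 * δ := by
    have e : d * d - d = d * (d - p) + (d - p) * p - (d - p) := by
      rw [mul_sub, sub_mul, hp.2]; abel
    rw [e]
    have h1 : ‖d * (d - p)‖ ≤ 2 * δ := (norm_mul_le _ _).trans (by gcongr)
    have h2 : ‖(d - p) * p‖ ≤ δ * 1 := (norm_mul_le _ _).trans (by gcongr)
    have h3 := norm_sub_le (d * (d - p) + (d - p) * p) (d - p)
    have h4 := norm_add_le (d * (d - p)) ((d - p) * p)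
    linarith
  have hspec : ∀ t ∈ spectrum ℝ d, |t * t - t| ≤ 4 * δ := by
    intro t ht
    have e : d * d - d = cfc (fun t : ℝ ↦ t * t - t) d := by
      rw [cfc_sub (fun t : ℝ ↦ t * t) (fun t ↦ t) d, cfc_mul (fun t : ℝ ↦ t) (fun t ↦ t) d,
        cfc_id' ℝ d]
    have := norm_apply_le_norm_cfc (fun t : ℝ ↦ t * t - t) d ht
    rw [← e] at this
    exact this.trans hdd
  set f : ℝ → ℝ := fun t ↦ max 0 (min 1 (2 * t - 1 / 2)) with hf
  have hfc : Continuous f := by fun_prop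
  have hdich : ∀ t ∈ spectrum ℝ d, (f t = 0 ∧ |t| ≤ 8 * δ) ∨ (f t = 1 ∧ |t - 1| ≤ 8 * δ) := by
    intro t ht
    have h := hspec t ht
    rw [show t * t - t = t * (t - 1) by ring, abs_mul] at h
    rcases le_total t (1 / 2) with h1 | h1
    · left
      have h2 : 1 / 2 ≤ |t - 1| := by rw [abs_of_nonpos (by linarith)]; linarith
      have h3 : |t| ≤ 8 * δ := by nlinarith [abs_nonneg t]
      refine ⟨?_, h3⟩
      have := le_abs_self t
      have h5 : 2 * t - 1 / 2 ≤ 0 := by linarith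
      rw [hf]
      exact max_eq_left ((min_le_right _ _).trans h5)
    · right
      have h2 : 1 / 2 ≤ |t| := h1.trans (le_abs_self t)
      have h3 : |t - 1| ≤ 8 * δ := by nlinarith [abs_nonneg (t - 1)]
      refine ⟨?_, h3⟩
      have := neg_abs_le (t - 1)
      have h5 : 1 ≤ 2 * t - 1 / 2 := by linarith
      simp only [hf]
      rw [min_eq_left h5]
      simp
  have hcont1 : Continuous fun t ↦ f t / max t (1 / 4) :=
    hfc.div (by fun_prop) fun t ↦ (lt_max_of_lt_right (by norm_num)).ne'
  have hcont2 : Continuous fun t ↦ (1 - f t) / max (1 - t) (1 / 4) :=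
    (continuous_const.sub hfc).div (by fun_prop)
      fun t ↦ (lt_max_of_lt_right (by norm_num)).ne'
  have hfg : ∀ t ∈ spectrum ℝ d, f t = f t / max t (1 / 4) * t := by
    intro t ht
    rcases hdich t ht with ⟨h, -⟩ | ⟨h, h'⟩
    · simp [h]
    · have := neg_abs_le (t - 1)
      have h6 : 1 / 4 ≤ t := by linarith
      rw [max_eq_left h6, div_mul_cancel₀ _ (by linarith)]
  have hfk : ∀ t ∈ spectrum ℝ d, 1 - f t = (1 - t) * ((1 - f t) / max (1 - t) (1 / 4)) := by
    intro t ht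
    rcases hdich t ht with ⟨h, h'⟩ | ⟨h, -⟩
    · have := le_abs_self t
      have h6 : 1 / 4 ≤ 1 - t := by linarith
      rw [max_eq_left h6, mul_div_cancel₀ _ (by linarith)]
    · simp [h]
  have hr : cfc f d = cfc (fun t ↦ f t / max t (1 / 4)) d * d := by
    nth_rw 3 [← cfc_id' ℝ d]
    rw [← cfc_mul _ (fun t : ℝ ↦ t) d hcont1.continuousOn]
    exact cfc_congr hfg
  have hr' : cfc f d = d * cfc (fun t ↦ f t / max t (1 / 4)) d := by
    rw [hr]
    nth_rw 2 3 [← cfc_id' ℝ d]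
    exact cfc_commute_cfc _ _ d
  have hk : 1 - cfc f d = (1 - d) * cfc (fun t ↦ (1 - f t) / max (1 - t) (1 / 4)) d := by
    have e1 : 1 - cfc f d = cfc (fun t ↦ 1 - f t) d := by
      rw [cfc_sub (fun _ ↦ 1) f d continuousOn_const hfc.continuousOn, cfc_const_one ℝ d]
    have e2 : 1 - d = cfc (fun t : ℝ ↦ 1 - t) d := by
      rw [cfc_sub (fun _ ↦ 1) (fun t : ℝ ↦ t) d, cfc_const_one ℝ d, cfc_id' ℝ d]
    rw [e1, e2, ← cfc_mul _ _ d (by fun_prop) hcont2.continuousOn]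
    exact cfc_congr hfk
  have hdr : ‖cfc f d - d‖ ≤ 8 * δ := by
    have e : cfc f d - d = cfc (fun t ↦ f t - t) d := by
      rw [cfc_sub f (fun t ↦ t) d hfc.continuousOn, cfc_id' ℝ d]
    rw [e]
    refine norm_cfc_le (by linarith) fun t ht ↦ ?_
    rcases hdich t ht with ⟨h, h'⟩ | ⟨h, h'⟩
    · rw [h, zero_sub, norm_neg]; exact h'
    · rw [h, norm_sub_rev]; exact h'
  refine ⟨cfc f d, cfc (fun t ↦ f t / max t (1 / 4)) d,
    cfc (fun t ↦ (1 - f t) / max (1 - t) (1 / 4)) d, ⟨?_, ?_⟩, hr, hr', hk, ?_⟩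
  · exact (cfc_predicate (R := ℝ) f d).star_eq
  · rw [← cfc_mul f f d hfc.continuousOn hfc.continuousOn]
    refine cfc_congr fun t ht ↦ ?_
    rcases hdich t ht with ⟨h, -⟩ | ⟨h, -⟩ <;> simp [h]
  · calc ‖cfc f d - p‖ = ‖(cfc f d - d) + (d - p)‖ := by simp
      _ ≤ ‖cfc f d - d‖ + ‖d - p‖ := norm_add_le _ _
      _ ≤ 9 * δ := by linarith

/-- A projection almost dominating `q` can be perturbed to one dominating `q`, keeping its left
kernel. -/
lemma exists_isProjection_ge {p q : D} (hp : IsProjection p) (hq : IsProjection q) {δ : ℝ}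
    (hδ : δ ≤ 1 / 300) (h : ‖p * q - q‖ ≤ δ) :
    ∃ r : D, IsProjection r ∧ q * r = q ∧ ‖r - p‖ ≤ 27 * δ ∧
      ∀ z, p * z = 0 → q * z = 0 → r * z = 0 := by
  have hqs : IsSelfAdjoint q := hq.1
  have hps : IsSelfAdjoint p := hp.1
  set d := q + (1 - q) * p * (1 - q) with hd
  have hds : IsSelfAdjoint d := by
    refine hqs.add ?_
    have := hps.conjugate (1 - q)
    rwa [hq.one_sub.1] at this
  have hqd : q * d = q := by
    have h0 : q * (1 - q) = 0 := by rw [mul_sub, mul_one, hq.2, sub_self]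
    rw [hd, mul_add, hq.2, ← mul_assoc, ← mul_assoc, h0, zero_mul, zero_mul, add_zero]
  have hdp : ‖d - p‖ ≤ 3 * δ := by
    have e : d - p = -(star (p * q - q)) - (p * q - q) + q * (p * q - q) := by
      rw [hd, star_sub, star_mul, hqs.star_eq, hps.star_eq]
      simp only [mul_sub, sub_mul, hq.2, mul_one, one_mul, mul_assoc]
      abel
    have h1 : ‖q * (p * q - q)‖ ≤ 1 * δ := (norm_mul_le _ _).trans
      (mul_le_mul hq.norm_le_one h (norm_nonneg _) zero_le_one)
    have h2 := norm_add_le (-(star (p * q - q)) - (p * q - q)) (q * (p * q - q))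
    have h3 := norm_sub_le (-(star (p * q - q))) (p * q - q)
    rw [norm_neg, norm_star] at h3
    rw [e]
    linarith
  obtain ⟨r, g, k, hr, hrg, -, hrk, hrp⟩ :=
    exists_isProjection_near hds hp (by linarith : 3 * δ ≤ 1 / 100) hdp
  refine ⟨r, hr, ?_, by linarith, fun z hpz hqz ↦ ?_⟩
  · have : q * (1 - r) = 0 := by rw [hrk, ← mul_assoc, mul_sub, mul_one, hqd, sub_self, zero_mul]
    rw [mul_sub, mul_one, sub_eq_zero] at this
    exact this.symm
  · have hdz : d * z = 0 := by
      rw [hd, add_mul, hqz, zero_add, mul_assoc, sub_mul 1 q z, hqz, sub_zero, one_mul, mul_assoc,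
        hpz, mul_zero]
    rw [hrg, mul_assoc, hdz, mul_zero]

/-- If `b p = b`, then `b + η p` has spectrum in `{0, η} ∪ (η + σ(b))`. -/
lemma spectrum_finite_add_smul_of_mul_eq {b p : D} (hp : p * p = p)
    (hbp : b * p = b) (η : ℂ) (hb : (spectrum ℂ b).Finite) :
    (spectrum ℂ (b + η • p)).Finite := by
  refine (((hb.image fun z ↦ z + η).insert 0).insert η).subset fun z hz ↦ ?_
  by_contra h
  simp only [Set.mem_insert_iff, Set.mem_image, not_or, not_exists, not_and] at h
  obtain ⟨h1, h2, h3⟩ := h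
  have hu1 : IsUnit (algebraMap ℂ D (z - η) - b) := by
    by_contra hc
    exact h3 (z - η) hc (by ring)
  have hz1 : z - η ≠ 0 := sub_ne_zero.mpr h1
  have hu2 : IsUnit (algebraMap ℂ D z - η • p) := by
    have e1 : (algebraMap ℂ D z - η • p) * (algebraMap ℂ D (z - η) + η • p) =
        algebraMap ℂ D (z * (z - η)) := by
      simp only [Algebra.algebraMap_eq_smul_one, mul_add, sub_mul, smul_mul_smul_comm, hp, one_mul,
        mul_one]
      module
    have e2 : (algebraMap ℂ D (z - η) + η • p) * (algebraMap ℂ D z - η • p) =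
        algebraMap ℂ D (z * (z - η)) := by
      simp only [Algebra.algebraMap_eq_smul_one, add_mul, mul_sub, smul_mul_smul_comm, hp, one_mul,
        mul_one]
      module
    have hu : IsUnit (algebraMap ℂ D (z * (z - η))) :=
      (IsUnit.mk0 _ (mul_ne_zero h2 hz1)).map _
    have hcomm : Commute (algebraMap ℂ D z - η • p) (algebraMap ℂ D (z - η) + η • p) :=
      e1.trans e2.symm
    exact (hcomm.isUnit_mul_iff.mp (e1 ▸ hu)).1
  have e : (algebraMap ℂ D (z - η) - b) * (algebraMap ℂ D z - η • p) =
      algebraMap ℂ D (z - η) * (algebraMap ℂ D z - (b + η • p)) := by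
    simp only [Algebra.algebraMap_eq_smul_one, mul_add, sub_mul, mul_sub,
      smul_mul_assoc, mul_smul_comm, hbp, one_mul, mul_one]
    module
  have hu3 := hu1.mul hu2
  rw [e] at hu3
  have hu4 : IsUnit (algebraMap ℂ D (z - η)) := (IsUnit.mk0 _ hz1).map _
  exact hz ((hu4.mul_left_iff).mp hu3)

lemma spectrum_finite_sub_of_mul_eq_zero {b c : D} (hbc : b * c = 0)
    (hb : (spectrum ℂ b).Finite) (hc : (spectrum ℂ c).Finite) :
    (spectrum ℂ (b - c)).Finite := by
  refine ((hb.union (hc.image fun z ↦ -z)).insert 0).subset fun z hz ↦ ?_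
  by_contra h
  simp only [Set.mem_insert_iff, Set.mem_image, Set.mem_union, not_or, not_exists, not_and] at h
  obtain ⟨h1, h2, h3⟩ := h
  have hu1 : IsUnit (algebraMap ℂ D z - b) := by
    by_contra hc
    exact h2 hc
  have hu2 : IsUnit (algebraMap ℂ D z + c) := by
    by_contra hc
    refine h3 (-z) ?_ (by ring)
    intro hc'
    apply hc
    rw [spectrum.mem_resolventSet_iff, map_neg, ← neg_add', IsUnit.neg_iff] at hc'
    exact hc'
  have e : (algebraMap ℂ D z - b) * (algebraMap ℂ D z + c) =
      algebraMap ℂ D z * (algebraMap ℂ D z - (b - c)) := by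
    simp only [Algebra.algebraMap_eq_smul_one, mul_add, sub_mul, mul_sub,
      smul_mul_assoc, mul_smul_comm, hbc, one_mul, mul_one]
    module
  have hu3 := hu1.mul hu2
  rw [e] at hu3
  have hu4 : IsUnit (algebraMap ℂ D z) := (IsUnit.mk0 _ h1).map _
  exact hz ((hu4.mul_left_iff).mp hu3)

lemma spectrum_finite_sub_algebraMap {b : D} (hb : (spectrum ℂ b).Finite) (z : ℂ) :
    (spectrum ℂ (b - algebraMap ℂ D z)).Finite := by
  rw [← spectrum.sub_singleton_eq]
  exact hb.sub (Set.finite_singleton z)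

/-- The element `(a - s)₊`. -/
noncomputable def cutdown (a : D) (s : ℝ) : D := cfc (fun t : ℝ ↦ max (t - s) 0) a

/-- The element `min ((a - s)₊ / η, 1)`. -/
noncomputable def ramp (a : D) (s η : ℝ) : D :=
  cfc (fun t : ℝ ↦ min (max (t - s) 0 / η) 1) a

lemma cutdown_add_smul_ramp (a : D) (s : ℝ) {η : ℝ} (hη : 0 < η) :
    cutdown a (s + η) + η • ramp a s η = cutdown a s := by
  rw [cutdown, cutdown, ramp, ← cfc_smul η (fun t : ℝ ↦ min (max (t - s) 0 / η) 1) a,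
    ← cfc_add a (fun t : ℝ ↦ max (t - (s + η)) 0) (fun t ↦ η • min (max (t - s) 0 / η) 1)]
  refine cfc_congr fun t _ ↦ ?_
  have e : η • min (max (t - s) 0 / η) 1 = min (max (t - s) 0) η := by
    rw [smul_eq_mul, mul_min_of_nonneg _ _ hη.le, mul_one, mul_div_cancel₀ _ hη.ne']
  simp only [e]
  grind

lemma cutdown_add_mul_eq_zero {a : D} {s η : ℝ} (hη : 0 < η) {z : D} (hz : cutdown a s * z = 0) :
    cutdown a (s + η) * z = 0 := by
  have hc : Continuous fun t : ℝ ↦ max (t - (s + η)) 0 / max (t - s) η :=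
    Continuous.div (by fun_prop) (by fun_prop) fun t ↦ (lt_max_of_lt_right hη).ne'
  have e : cutdown a (s + η) =
      cfc (fun t : ℝ ↦ max (t - (s + η)) 0 / max (t - s) η) a * cutdown a s := by
    rw [cutdown, cutdown, ← cfc_mul _ _ a hc.continuousOn (by fun_prop)]
    refine cfc_congr fun t _ ↦ ?_
    rcases le_total (t - s) η with h | h
    · simp [max_eq_right (show t - (s + η) ≤ 0 by linarith)]
    · simp only [max_eq_left h, max_eq_left (hη.le.trans h)]
      rw [div_mul_cancel₀ _ (by linarith)]
  rw [e, mul_assoc, hz, mul_zero]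

lemma cutdown_mul_one_sub_ramp (a : D) (s : ℝ) {η : ℝ} (hη : 0 < η) :
    cutdown a (s + η) * (1 - ramp a s η) = 0 := by
  refine cfc_mul_one_sub_cfc_eq_zero a (by fun_prop) (by fun_prop) fun t ↦ ?_
  rcases le_total t (s + η) with h | h
  · rw [max_eq_right (by linarith), zero_mul]
  · rw [min_eq_right, sub_self, mul_zero]
    rw [one_le_div hη]
    exact (by linarith : η ≤ t - s).trans (le_max_left _ _)

lemma norm_ramp_le_one (a : D) (s : ℝ) {η : ℝ} (hη : 0 < η) : ‖ramp a s η‖ ≤ 1 := by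
  refine norm_cfc_le zero_le_one fun t _ ↦ ?_
  have : 0 ≤ min (max (t - s) 0 / η) 1 := by positivity
  rw [Real.norm_of_nonneg this]
  exact min_le_right _ _

lemma isSelfAdjoint_ramp (a : D) (s η : ℝ) : IsSelfAdjoint (ramp a s η) := cfc_predicate _ _

lemma norm_mul_ramp_sub_le {a p : D} {s η δ : ℝ} (hη : 0 < η)
    (h : ‖p * cutdown a s - cutdown a s‖ ≤ δ * η) :
    ‖p * ramp a s η - ramp a s η‖ ≤ δ := by
  have hc : Continuous fun t : ℝ ↦ (max (t - s) η)⁻¹ :=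
    Continuous.inv₀ (by fun_prop) fun t ↦ (lt_max_of_lt_right hη).ne'
  have e : ramp a s η = cutdown a s * cfc (fun t : ℝ ↦ (max (t - s) η)⁻¹) a := by
    rw [ramp, cutdown, ← cfc_mul _ _ a (by fun_prop) hc.continuousOn]
    refine cfc_congr fun t _ ↦ ?_
    rcases le_total (t - s) η with h | h
    · simp only [max_eq_right h]
      rw [min_eq_left, div_eq_mul_inv]
      exact div_le_one_of_le₀ (max_le h hη.le) hη.le
    · simp only [max_eq_left h, max_eq_left (hη.le.trans h)]
      rw [min_eq_right, mul_inv_cancel₀ (by linarith)]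
      rwa [one_le_div hη]
  have hn : ‖cfc (fun t : ℝ ↦ (max (t - s) η)⁻¹) a‖ ≤ η⁻¹ := by
    refine norm_cfc_le (by positivity) fun t _ ↦ ?_
    rw [Real.norm_of_nonneg (inv_nonneg.mpr (hη.le.trans (le_max_right _ _)))]
    gcongr
    exact le_max_right _ _
  calc ‖p * ramp a s η - ramp a s η‖
      = ‖(p * cutdown a s - cutdown a s) * cfc (fun t : ℝ ↦ (max (t - s) η)⁻¹) a‖ := by
        rw [e, sub_mul, mul_assoc]
    _ ≤ (δ * η) * η⁻¹ := (norm_mul_le _ _).trans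
        (mul_le_mul h hn (norm_nonneg _) ((norm_nonneg _).trans h))
    _ = δ := by field_simp

section Order

variable [PartialOrder D] [StarOrderedRing D]

lemma ramp_nonneg (a : D) (s : ℝ) {η : ℝ} (hη : 0 < η) : 0 ≤ ramp a s η :=
  cfc_nonneg fun t _ ↦ by positivity

lemma IsProjection.le_of_mul_one_sub_eq_zero {r m : D} (hr : IsProjection r) (hm : 0 ≤ m)
    (h : r * (1 - m) = 0) : r ≤ m := by
  have h1 : r * m = r := by rw [mul_sub, mul_one, sub_eq_zero] at h; exact h.symm
  have h2 : m * r = r := by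
    have := congrArg star h1
    rwa [star_mul, hr.1, (IsSelfAdjoint.of_nonneg hm).star_eq] at this
  have h3 : star (1 - r) * m * (1 - r) = m - r := by
    rw [hr.one_sub.1, sub_mul, one_mul, h1, mul_sub, mul_one, sub_mul, h2, hr.2]
    abel
  have := star_left_conjugate_nonneg hm (1 - r)
  rw [h3] at this
  exact sub_nonneg.mp this

lemma le_add_algebraMap_of_norm_mul_sub_le {r m : D} (hr : IsProjection r) (hm : 0 ≤ m)
    (hm1 : ‖m‖ ≤ 1) {δ : ℝ} (h : ‖r * m - m‖ ≤ δ) : m ≤ r + algebraMap ℝ D (2 * δ) := by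
  have hms : IsSelfAdjoint m := .of_nonneg hm
  have hrs : IsSelfAdjoint r := hr.1
  have h1 : r * m * r ≤ r := by
    have h2 : m ≤ 1 := by simpa using (CStarAlgebra.norm_le_one_iff_of_nonneg m).mp hm1
    have := star_left_conjugate_le_conjugate h2 r
    rwa [hr.1, mul_one, hr.2] at this
  have hE : IsSelfAdjoint (m - r * m * r) := by
    refine hms.sub ?_
    have := hms.conjugate r
    rwa [hr.1] at this
  have hn : ‖m - r * m * r‖ ≤ 2 * δ := by
    have e : m - r * m * r = -(r * m - m) + -(r * (star (r * m - m))) := by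
      rw [star_sub, star_mul, hms.star_eq, hrs.star_eq, mul_sub, mul_assoc]; abel
    rw [e]
    refine (norm_add_le _ _).trans ?_
    rw [norm_neg, norm_neg]
    have : ‖r * star (r * m - m)‖ ≤ 1 * δ := by
      refine (norm_mul_le _ _).trans ?_
      rw [norm_star]
      exact mul_le_mul hr.norm_le_one h (norm_nonneg _) zero_le_one
    linarith
  have h3 : m - r * m * r ≤ algebraMap ℝ D (2 * δ) :=
    hE.le_algebraMap_norm_self.trans (algebraMap_mono D hn)
  calc m = r * m * r + (m - r * m * r) := by abel
    _ ≤ _ := add_le_add h1 h3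

/-- The cutdown `(a - s)₊` is, up to an error from above slightly larger than `0` and from below
at most `η`, a self-adjoint element with finite spectrum supported on a projection under the
support of `(a - s)₊`. -/
def HasSpectralApprox (a : D) (η s : ℝ) : Prop :=
  ∀ δ : ℝ, 0 < δ → ∃ b q : D, IsSelfAdjoint b ∧ (spectrum ℂ b).Finite ∧ IsProjection q ∧
    b * q = b ∧ (∀ z, cutdown a s * z = 0 → q * z = 0) ∧
    cutdown a s ≤ b + algebraMap ℝ D δ ∧ b ≤ cutdown a (s - η)

/-- There are projections under the support of `(a - s)₊` which are almost units for it. -/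
def HasSupportProjections (a : D) (s : ℝ) : Prop :=
  ∀ δ : ℝ, 0 < δ → ∃ p : D, IsProjection p ∧ (∀ z, cutdown a s * z = 0 → p * z = 0) ∧
    ‖p * cutdown a s - cutdown a s‖ ≤ δ

lemma HasSpectralApprox.of_add {a : D} {η s : ℝ} (hη : 0 < η) (H : HasSupportProjections a s)
    (h : HasSpectralApprox a η (s + η)) : HasSpectralApprox a η s := by
  intro δ hδ
  obtain ⟨b, q, hb, hbf, hq, hbq, hqz, hlow, hup⟩ := h (δ / 2) (by positivity)
  set δ₁ : ℝ := min (1 / 300) (δ / (112 * η)) with hδ₁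
  have hδ₁0 : 0 < δ₁ := by positivity
  have hδ₁1 : 112 * η * δ₁ ≤ δ := by
    have := min_le_right (1 / 300) (δ / (112 * η))
    rw [← hδ₁, le_div_iff₀ (by positivity)] at this
    linarith
  obtain ⟨p, hp, hpz, hpn⟩ := H (δ₁ * η) (by positivity)
  set m := ramp a s η with hm
  have hm0 : 0 ≤ m := ramp_nonneg a s hη
  have hm1 : ‖m‖ ≤ 1 := norm_ramp_le_one a s hη
  have hpm : ‖p * m - m‖ ≤ δ₁ := norm_mul_ramp_sub_le hη hpn
  have hmq : m * q = q := by
    have h1 := hqz _ (cutdown_mul_one_sub_ramp a s hη)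
    rw [mul_sub, mul_one, sub_eq_zero] at h1
    have := congrArg star h1
    rw [star_mul, hq.1, (isSelfAdjoint_ramp a s η).star_eq] at this
    exact this.symm
  have hpq : ‖p * q - q‖ ≤ δ₁ := by
    have e : p * q - q = (p * m - m) * q := by rw [sub_mul, mul_assoc, hmq]
    rw [e]
    refine (norm_mul_le _ _).trans ?_
    have := mul_le_mul hpm hq.norm_le_one (norm_nonneg _) hδ₁0.le
    linarith
  obtain ⟨r, hr, hqr, hrp, hrz⟩ := exists_isProjection_ge hp hq (min_le_left _ _) hpq
  have hbr : b * r = b := by rw [← hbq, mul_assoc, hqr]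
  have hker : ∀ z, cutdown a s * z = 0 → r * z = 0 := fun z hz ↦
    hrz z (hpz z hz) (hqz z (cutdown_add_mul_eq_zero hη hz))
  refine ⟨b + η • r, r, hb.add (IsSelfAdjoint.smul (IsSelfAdjoint.all η) hr.1), ?_, hr, ?_, hker,
    ?_, ?_⟩
  · have := spectrum_finite_add_smul_of_mul_eq hr.2 hbr (η : ℂ) hbf
    rwa [Complex.coe_smul] at this
  · rw [add_mul, hbr, smul_mul_assoc, hr.2]
  · have hrm : ‖r * m - m‖ ≤ 28 * δ₁ := by
      have e : r * m - m = (r - p) * m + (p * m - m) := by rw [sub_mul]; abel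
      have h1 : ‖(r - p) * m‖ ≤ 27 * δ₁ * 1 := (norm_mul_le _ _).trans
        (mul_le_mul hrp hm1 (norm_nonneg _) (by positivity))
      rw [e]
      refine (norm_add_le _ _).trans ?_
      linarith
    have h1 := le_add_algebraMap_of_norm_mul_sub_le hr hm0 hm1 hrm
    have h2 : η • m ≤ η • (r + algebraMap ℝ D (2 * (28 * δ₁))) :=
      smul_le_smul_of_nonneg_left h1 hη.le
    have h3 : η • algebraMap ℝ D (2 * (28 * δ₁)) ≤ algebraMap ℝ D (δ / 2) := by
      have e : η • algebraMap ℝ D (2 * (28 * δ₁)) = algebraMap ℝ D (η * (2 * (28 * δ₁))) := by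
        rw [Algebra.algebraMap_eq_smul_one, Algebra.algebraMap_eq_smul_one, smul_smul]
      rw [e]
      exact algebraMap_mono D (by linarith)
    calc cutdown a s = cutdown a (s + η) + η • m := (cutdown_add_smul_ramp a s hη).symm
      _ ≤ (b + algebraMap ℝ D (δ / 2)) + (η • r + algebraMap ℝ D (δ / 2)) := by
        refine add_le_add hlow (h2.trans ?_)
        rw [smul_add]
        exact add_le_add_right h3 _
      _ = b + η • r + algebraMap ℝ D δ := by
        rw [show algebraMap ℝ D δ = algebraMap ℝ D (δ / 2) + algebraMap ℝ D (δ / 2) by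
          rw [← map_add, add_halves]]
        abel
  · rw [add_sub_cancel_right] at hup
    have h1 : r ≤ ramp a (s - η) η := by
      refine hr.le_of_mul_one_sub_eq_zero (ramp_nonneg a _ hη) (hker _ ?_)
      have := cutdown_mul_one_sub_ramp a (s - η) hη
      rwa [sub_add_cancel] at this
    have h2 := cutdown_add_smul_ramp a (s - η) hη
    rw [sub_add_cancel] at h2
    rw [← h2]
    exact add_le_add hup (smul_le_smul_of_nonneg_left h1 hη.le)

lemma hasSpectralApprox_of_norm_le [Nontrivial D] {a : D} {η s : ℝ} (hs : ‖a‖ ≤ s) :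
    HasSpectralApprox a η s := by
  have hz : cutdown a s = 0 := by
    rw [cutdown, ← cfc_const_zero ℝ a]
    refine cfc_congr fun t ht ↦ ?_
    have h1 : ‖t‖ ≤ ‖a‖ := spectrum.norm_le_norm_of_mem ht
    have := le_abs_self t
    rw [← Real.norm_eq_abs] at this
    exact max_eq_right (by linarith)
  refine fun δ hδ ↦ ⟨0, 0, .zero _, ?_, ⟨star_zero _, mul_zero _⟩, mul_zero _,
    fun z _ ↦ zero_mul z, ?_, cfc_nonneg fun t _ ↦ le_max_right _ _⟩
  · rw [spectrum.zero_eq]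
    exact Set.finite_singleton 0
  · rw [hz, zero_add]
    exact algebraMap_nonneg D hδ.le

/-- Positive elements with enough support projections are limits of self-adjoint elements with
finite spectrum, supported under them. -/
lemma exists_finite_spectrum_near_of_nonneg [Nontrivial D] {a : D} (ha : 0 ≤ a)
    (H : ∀ s, 0 ≤ s → HasSupportProjections a s) {ε : ℝ} (hε : 0 < ε) :
    ∃ b : D, IsSelfAdjoint b ∧ (spectrum ℂ b).Finite ∧ ‖a - b‖ ≤ ε ∧
      ∀ z, a * z = 0 → b * z = 0 := by
  set η := ε / 3 with hη
  have hη0 : 0 < η := by positivity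
  have key : ∀ (n : ℕ) (s : ℝ), 0 ≤ s → ‖a‖ ≤ s + n * η → HasSpectralApprox a η s := by
    intro n
    induction n with
    | zero => exact fun s _ h ↦ hasSpectralApprox_of_norm_le (by simpa using h)
    | succ n ih =>
      intro s hs h
      refine .of_add hη0 (H s hs) (ih (s + η) (by positivity) ?_)
      push_cast at h
      linarith
  obtain ⟨n, hn⟩ := exists_nat_ge (‖a‖ / η)
  rw [div_le_iff₀ hη0] at hn
  obtain ⟨b, q, hb, hbf, -, hbq, hqz, hlow, hup⟩ := key n 0 le_rfl (by linarith) η hη0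
  have hc0 : cutdown a 0 = a := by
    conv_rhs => rw [← cfc_id' ℝ a]
    refine cfc_congr fun t ht ↦ ?_
    simpa using spectrum_nonneg_of_nonneg ha ht
  have hc1 : cutdown a (0 - η) = a + algebraMap ℝ D η := by
    nth_rewrite 2 [← cfc_id' ℝ a]
    rw [cutdown, ← cfc_const η a, ← cfc_add a (fun t : ℝ ↦ t) (fun _ ↦ η)]
    refine cfc_congr fun t ht ↦ ?_
    have := spectrum_nonneg_of_nonneg ha ht
    simp only [zero_sub, sub_neg_eq_add]
    exact max_eq_left (by positivity)
  rw [hc0] at hlow hqz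
  rw [hc1] at hup
  refine ⟨b, hb, hbf, ?_, fun z hz ↦ ?_⟩
  · have h0 : 0 ≤ b - a + algebraMap ℝ D η := by
      have := sub_nonneg.mpr hlow
      convert this using 1
      abel
    have h1 : b - a + algebraMap ℝ D η ≤ algebraMap ℝ D (2 * η) := by
      rw [two_mul, map_add]
      exact add_le_add_left (sub_le_iff_le_add'.mpr hup) _
    have h2 := (CStarAlgebra.norm_le_iff_le_algebraMap _ (by positivity) h0).mpr h1
    have h3 : ‖algebraMap ℝ D η‖ ≤ η := by
      rw [norm_algebraMap', Real.norm_of_nonneg hη0.le]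
    calc ‖a - b‖ = ‖algebraMap ℝ D η - (b - a + algebraMap ℝ D η)‖ := by congr 1; abel
      _ ≤ ‖algebraMap ℝ D η‖ + ‖b - a + algebraMap ℝ D η‖ := norm_sub_le _ _
      _ ≤ ε := by linarith
  · rw [← hbq, mul_assoc, hqz z hz, mul_zero]

end Order

end UnitalCStarAlgebra

section NonUnital

variable {B : Type*} [NonUnitalCStarAlgebra B]

lemma Unitization.norm_fst_le (x : Unitization ℂ B) : ‖x.fst‖ ≤ ‖x‖ := by
  rw [Unitization.norm_eq_sup]
  exact le_sup_left

lemma inr_mul_eq_zero_of_mem_herSub {S : Set B} {x p : B} (hp : p ∈ herSub S x)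
    {z : Unitization ℂ B} (hz : (x : Unitization ℂ B) * z = 0) :
    (p : Unitization ℂ B) * z = 0 := by
  have hcl : IsClosed {p : B | (p : Unitization ℂ B) * z = 0} :=
    isClosed_eq (by have := Unitization.isometry_inr (𝕜 := ℂ) (A := B) |>.continuous; fun_prop)
      continuous_const
  refine closure_minimal ?_ hcl hp
  rintro _ ⟨b, -, rfl⟩
  simp only [Set.mem_ofPred_eq, Unitization.inr_mul, mul_assoc, hz, mul_zero]

lemma IsProjection.inr {p : B} (hp : IsProjection p) : IsProjection (p : Unitization ℂ B) :=
  ⟨by rw [← Unitization.inr_star, hp.1], by rw [← Unitization.inr_mul, hp.2]⟩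

variable [PartialOrder B] [StarOrderedRing B]

lemma mem_herSub_self {x : B} (hx : 0 ≤ x) : x ∈ herSub Set.univ x := by
  have hxs : IsSelfAdjoint x := .of_nonneg hx
  refine Metric.mem_closure_iff.mpr fun ε hε ↦ ?_
  obtain ⟨e, he, heε⟩ := exists_between hε
  have hc : Continuous fun t : ℝ ↦ t / max t e ^ 2 :=
    Continuous.div (by fun_prop) (by fun_prop) fun t ↦ (pow_pos (lt_max_of_lt_right he) 2).ne'
  set g : ℝ → ℝ := fun t ↦ t / max t e ^ 2 with hg
  have hg0 : g 0 = 0 := by simp [hg]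
  refine ⟨_, ⟨cfcₙ g x, trivial, rfl⟩, lt_of_le_of_lt ?_ heε⟩
  have h1 : x * cfcₙ g x * x = cfcₙ (fun t ↦ t * g t * t) x := by
    rw [cfcₙ_mul (fun t ↦ t * g t) (fun t ↦ t) x (by fun_prop) (by simp) (by fun_prop),
      cfcₙ_mul (fun t ↦ t) g x (by fun_prop) rfl (by fun_prop), cfcₙ_id' ℝ x]
  have h2 : x - x * cfcₙ g x * x = cfcₙ (fun t ↦ t - t * g t * t) x := by
    rw [cfcₙ_sub (fun t ↦ t) (fun t ↦ t * g t * t) x (by fun_prop) rfl (by fun_prop) (by simp),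
      cfcₙ_id' ℝ x, h1]
  rw [dist_eq_norm, h2]
  refine norm_cfcₙ_le fun t ht ↦ ?_
  have ht0 : 0 ≤ t := quasispectrum_nonneg_of_nonneg x hx t ht
  rcases le_total t e with h | h
  · have h3 : t * g t * t = t * (t / e) ^ 2 := by simp only [hg, max_eq_right h]; ring
    have h4 : t / e ≤ 1 := div_le_one_of_le₀ h he.le
    have h5 : 0 ≤ t / e := by positivity
    have h6 : (t / e) ^ 2 ≤ 1 := pow_le_one₀ h5 h4
    rw [h3, Real.norm_of_nonneg (by nlinarith)]
    nlinarith [sq_nonneg (t / e)]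
  · have h3 : t * g t * t = t := by
      simp only [hg, max_eq_left h]
      field_simp [(he.trans_le h).ne']
    rw [h3, sub_self, norm_zero]
    exact he.le

variable {A : NonUnitalStarSubalgebra ℂ B}

lemma InclusionRealRankZero.hasSupportProjections (hA : IsClosed (A : Set B))
    (h : InclusionRealRankZero (A : Set B) Set.univ) {a : B} (ha : a ∈ A)
    {s : ℝ} (hs : 0 ≤ s) : HasSupportProjections (a : Unitization ℂ B) s := by
  intro δ hδ
  have e : cutdown (a : Unitization ℂ B) s =
      ((cfcₙ (fun t : ℝ ↦ max (t - s) 0) a : B) : Unitization ℂ B) :=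
    (Unitization.real_cfcₙ_eq_cfc_inr a _ (by simpa using hs)).symm
  have hxA : cfcₙ (fun t : ℝ ↦ max (t - s) 0) a ∈ A := cfcₙ_mem (hs := hA) _ ha
  have hx0 : 0 ≤ cfcₙ (fun t : ℝ ↦ max (t - s) 0) a := cfcₙ_nonneg fun t _ ↦ le_max_right _ _
  rw [e]
  generalize cfcₙ (fun t : ℝ ↦ max (t - s) 0) a = x at hxA hx0
  by_cases hx : x = 0
  · refine ⟨0, ⟨star_zero _, mul_zero _⟩, fun z _ ↦ zero_mul z, ?_⟩
    simpa [hx] using hδ.le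
  · obtain ⟨p, hpx, hp, hpn⟩ := h x hxA hx0 hx x (mem_herSub_self hx0) hx0 δ hδ
    refine ⟨p, hp.inr, fun z ↦ inr_mul_eq_zero_of_mem_herSub hpx, ?_⟩
    rw [← Unitization.inr_mul, ← Unitization.inr_sub, Unitization.norm_inr]
    exact hpn.le

theorem InclusionRealRankZero.exists_finite_spectrum_near (hA : IsClosed (A : Set B))
    (h : InclusionRealRankZero (A : Set B) Set.univ) {a : B} (ha : a ∈ A) (has : IsSelfAdjoint a)
    {ε : ℝ} (hε : 0 < ε) :
    ∃ b : B, IsSelfAdjoint b ∧ (spectrum ℂ (b : Unitization ℂ B)).Finite ∧ ‖a - b‖ ≤ ε := by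
  have key : ∀ c ∈ A, 0 ≤ c → ∃ b : Unitization ℂ B, IsSelfAdjoint b ∧ (spectrum ℂ b).Finite ∧
      ‖(c : Unitization ℂ B) - b‖ ≤ ε / 4 ∧ ∀ z, (c : Unitization ℂ B) * z = 0 → b * z = 0 :=
    fun c hc hc0 ↦ exists_finite_spectrum_near_of_nonneg (Unitization.inr_nonneg_iff.mpr hc0)
      (fun s hs ↦ h.hasSupportProjections hA hc hs) (by positivity)
  obtain ⟨b, hb, hbf, hbn, hbz⟩ := key a⁺ (cfcₙ_mem (hs := hA) _ ha) (CFC.posPart_nonneg a)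
  obtain ⟨c, hc, hcf, hcn, hcz⟩ := key a⁻ (cfcₙ_mem (hs := hA) _ ha) (CFC.negPart_nonneg a)
  have hbc : b * c = 0 := by
    have h1 : b * (a⁻ : B) = 0 :=
      hbz _ (by rw [← Unitization.inr_mul, CFC.posPart_mul_negPart, Unitization.inr_zero])
    have h2 : ((a⁻ : B) : Unitization ℂ B) * b = 0 := by
      have := congrArg star h1
      rwa [star_mul, star_zero, hb.star_eq, ← Unitization.inr_star,
        (IsSelfAdjoint.of_nonneg (CFC.negPart_nonneg a)).star_eq] at this
    have := congrArg star (hcz _ h2)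
    rwa [star_mul, star_zero, hb.star_eq, hc.star_eq] at this
  have hd : IsSelfAdjoint (b - c) := hb.sub hc
  have hdn : ‖(a : Unitization ℂ B) - (b - c)‖ ≤ ε / 2 := by
    have e : (a : Unitization ℂ B) - (b - c) = ((a⁺ : B) - b) - ((a⁻ : B) - c) := by
      conv_lhs => rw [← CFC.posPart_sub_negPart a, Unitization.inr_sub]
      abel
    rw [e]
    refine (norm_sub_le _ _).trans ?_
    linarith
  have hfs : ‖(b - c).fst‖ ≤ ε / 2 := by
    have := (Unitization.norm_fst_le ((a : Unitization ℂ B) - (b - c))).trans hdn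
    rwa [sub_eq_add_neg, Unitization.fst_add, Unitization.fst_inr, zero_add, Unitization.fst_neg,
      norm_neg] at this
  have e : (((b - c).snd : B) : Unitization ℂ B) = (b - c) - algebraMap ℂ _ (b - c).fst := by
    rw [eq_sub_iff_add_eq', Unitization.algebraMap_eq_inl, Unitization.inl_fst_add_inr_snd_eq]
  refine ⟨(b - c).snd, ?_, ?_, ?_⟩
  · have := congrArg (fun x : Unitization ℂ B ↦ x.snd) hd.star_eq
    rwa [Unitization.snd_star] at this
  · rw [e]
    exact spectrum_finite_sub_algebraMap (spectrum_finite_sub_of_mul_eq_zero hbc hbf hcf) _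
  · rw [← Unitization.norm_inr (𝕜 := ℂ), Unitization.inr_sub, e]
    rw [show (a : Unitization ℂ B) - (b - c - algebraMap ℂ _ (b - c).fst) =
      (a - (b - c)) + algebraMap ℂ _ (b - c).fst by abel]
    refine (norm_add_le _ _).trans ?_
    rw [norm_algebraMap']
    linarith

end NonUnital

section Invertible

variable {D : Type*} [CStarAlgebra D]

/-- Self-adjoint elements with finite spectrum are limits of invertible self-adjoint elements. -/
lemma exists_isUnit_near_of_finite_spectrum [Nontrivial D] {b : D} (hb : IsSelfAdjoint b)
    (hbf : (spectrum ℂ b).Finite) {ε : ℝ} (hε : 0 < ε) :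
    ∃ y : D, IsSelfAdjoint y ∧ IsUnit y ∧ ‖b - y‖ ≤ ε := by
  have hfin : {t : ℝ | (t : ℂ) ∈ spectrum ℂ b}.Finite :=
    hbf.preimage Complex.ofReal_injective.injOn
  obtain ⟨t, ht, hts⟩ := ((Set.Ioo_infinite hε).sdiff hfin).nonempty
  refine ⟨b - algebraMap ℝ D t, hb.sub (.algebraMap D (.all t)), ?_, ?_⟩
  · have h : IsUnit (algebraMap ℂ D t - b) := by
      by_contra h
      exact hts h
    rw [← neg_sub, IsUnit.neg_iff]
    exact h
  · rw [sub_sub_cancel, norm_algebraMap', Real.norm_of_nonneg ht.1.le]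
    exact ht.2.le

lemma exists_norm_posPart_sub_le (a : D) (ha : IsSelfAdjoint a) {ε : ℝ} (hε : 0 < ε) :
    ∃ δ > 0, ∀ b : D, IsSelfAdjoint b → ‖a - b‖ ≤ δ → ‖a⁺ - b⁺‖ ≤ ε := by
  have h : ContinuousOn (fun x : D ↦ x⁺) {x : D | IsSelfAdjoint x} :=
    ContinuousOn.cfcₙ_of_mem_nhdsSet (s := Set.univ) (·⁺ : ℝ → ℝ) univ_mem continuousOn_id
      (fun x hx ↦ hx) (by fun_prop)
  obtain ⟨δ, hδ, H⟩ := Metric.continuousOn_iff.mp h a ha ε hε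
  refine ⟨δ / 2, by positivity, fun b hb hab ↦ ?_⟩
  rw [← dist_eq_norm, dist_comm]
  refine (H b hb ?_).le
  rw [dist_comm, dist_eq_norm]
  linarith

/-- The spectral projection of an invertible self-adjoint element for the positive half-line. -/
lemma exists_isProjection_mul_posPart {b : D} (hu : IsUnit b) :
    ∃ p : D, IsProjection p ∧ p * b⁺ = b⁺ ∧ p * b⁻ = 0 := by
  set f : ℝ → ℝ := fun t ↦ (1 + t / |t|) / 2 with hf
  have h0 : ∀ t ∈ spectrum ℝ b, t ≠ 0 := fun t ht h ↦
    spectrum.zero_notMem ℝ hu (h ▸ ht)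
  have hfc : ContinuousOn f (spectrum ℝ b) := by
    refine ContinuousOn.div_const (continuousOn_const.add (continuousOn_id.div (by fun_prop) ?_)) _
    exact fun t ht ↦ abs_ne_zero.mpr (h0 t ht)
  have hpos : ∀ t : ℝ, 0 < t → f t = 1 := fun t ht ↦ by
    simp only [hf, abs_of_pos ht, div_self ht.ne']
    norm_num
  have hneg : ∀ t : ℝ, t < 0 → f t = 0 := fun t ht ↦ by
    simp only [hf, abs_of_neg ht, div_neg, div_self ht.ne]
    norm_num
  refine ⟨cfc f b, ⟨cfc_predicate (p := IsSelfAdjoint) f b, ?_⟩, ?_, ?_⟩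
  · rw [← cfc_mul f f b]
    refine cfc_congr fun t ht ↦ ?_
    rcases (h0 t ht).lt_or_gt with h | h
    · simp [hneg t h]
    · simp [hpos t h]
  · rw [CFC.posPart_def, cfcₙ_eq_cfc, ← cfc_mul f _ b]
    refine cfc_congr fun t ht ↦ ?_
    rcases (h0 t ht).lt_or_gt with h | h
    · simp [posPart_eq_zero.mpr h.le]
    · simp [hpos t h]
  · rw [CFC.negPart_def, cfcₙ_eq_cfc, ← cfc_mul f _ b, ← cfc_const_zero ℝ b]
    refine cfc_congr fun t ht ↦ ?_
    rcases (h0 t ht).lt_or_gt with h | h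
    · simp [hneg t h]
    · simp [negPart_eq_zero.mpr h.le]

lemma exists_isProjection_separating [PartialOrder D] [StarOrderedRing D] {x y : D} (hx : 0 ≤ x)
    (hy : 0 ≤ y) (hxy : x * y = 0)
    (H : ∀ ε : ℝ, 0 < ε → ∃ b : D, IsSelfAdjoint b ∧ IsUnit b ∧ ‖x - y - b‖ ≤ ε)
    {ε : ℝ} (hε : 0 < ε) :
    ∃ p : D, IsProjection p ∧ ‖p * x - x‖ ≤ ε ∧ ‖(1 - p) * y - y‖ ≤ ε := by
  have ha : IsSelfAdjoint (x - y) := (IsSelfAdjoint.of_nonneg hx).sub (.of_nonneg hy)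
  obtain ⟨δ, hδ, hδH⟩ := exists_norm_posPart_sub_le _ ha (half_pos hε)
  obtain ⟨b, hb, hu, hbn⟩ := H (min δ (ε / 2)) (by positivity)
  have h1 := hδH b hb (hbn.trans (min_le_left _ _))
  have h2 := hbn.trans (min_le_right _ _)
  rw [(CFC.posPart_negPart_unique rfl hxy hx hy).1] at h1
  obtain ⟨p, hp, hpp, hpm⟩ := exists_isProjection_mul_posPart hu
  refine ⟨p, hp, ?_, ?_⟩
  · have e : p * x - x = -((1 - p) * (x - b⁺)) := by
      rw [mul_sub, sub_mul _ _ (b⁺), hpp]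
      noncomm_ring
    rw [e, norm_neg]
    refine (norm_mul_le _ _).trans ?_
    have := mul_le_mul hp.one_sub.norm_le_one h1 (norm_nonneg _) zero_le_one
    linarith
  · have e : (1 - p) * y - y = -(p * ((x - b⁺) - (x - y - b))) := by
      have : (x - b⁺) - (x - y - b) = y - b⁻ := by
        have hbb : b⁺ - b = b⁻ := by
          rw [sub_eq_iff_eq_add', ← sub_eq_iff_eq_add]
          exact CFC.posPart_sub_negPart b
        rw [← hbb]
        abel
      rw [this, mul_sub, hpm]
      noncomm_ring
    rw [e, norm_neg]
    refine (norm_mul_le _ _).trans ?_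
    have h3 := norm_sub_le (x - b⁺) (x - y - b)
    have := mul_le_mul hp.norm_le_one (show _ ≤ ε by linarith) (norm_nonneg _) zero_le_one
    linarith

end Invertible

section NonUnital

variable {B : Type*} [NonUnitalCStarAlgebra B]

lemma exists_isUnit_near_of_finite_spectrum_near {x : Unitization ℂ B} (hx : IsSelfAdjoint x)
    (H : ∀ ε : ℝ, 0 < ε → ∃ b : B, IsSelfAdjoint b ∧
      (spectrum ℂ (b : Unitization ℂ B)).Finite ∧ ‖x.snd - b‖ ≤ ε) {ε : ℝ} (hε : 0 < ε) :
    ∃ y : Unitization ℂ B, IsSelfAdjoint y ∧ IsUnit y ∧ ‖x - y‖ ≤ ε := by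
  obtain ⟨b, hb, hbf, hbn⟩ := H (ε / 2) (half_pos hε)
  have hfst : IsSelfAdjoint x.fst := by
    have := congrArg (fun x : Unitization ℂ B ↦ x.fst) hx.star_eq
    rwa [Unitization.fst_star] at this
  have hfin := spectrum_finite_sub_algebraMap hbf (-x.fst)
  have hsa : IsSelfAdjoint ((b : Unitization ℂ B) - algebraMap ℂ _ (-x.fst)) :=
    (hb.inr ℂ).sub (.algebraMap _ hfst.neg)
  obtain ⟨y, hy, hu, hyn⟩ := exists_isUnit_near_of_finite_spectrum hsa hfin (half_pos hε)
  refine ⟨y, hy, hu, ?_⟩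
  have e : x - y = ((x.snd - b : B) : Unitization ℂ B) +
      ((b : Unitization ℂ B) - algebraMap ℂ _ (-x.fst) - y) := by
    conv_lhs => rw [← Unitization.inl_fst_add_inr_snd_eq x]
    rw [map_neg, Unitization.algebraMap_eq_inl, Unitization.inr_sub]
    abel
  rw [e]
  refine (norm_add_le _ _).trans ?_
  rw [Unitization.norm_inr]
  linarith

lemma hasApproxUnitOfProjections_herSub [PartialOrder B] {a : B}
    (H : ∀ δ : ℝ, 0 < δ → ∃ r ∈ herSub Set.univ a, IsProjection r ∧ ‖r * a - a‖ ≤ δ) :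
    HasApproxUnitOfProjections (herSub Set.univ a) := by
  intro x hx _ ε hε
  obtain ⟨-, ⟨c, -, rfl⟩, hc⟩ := Metric.mem_closure_iff.mp hx (ε / 4) (by positivity)
  rw [dist_eq_norm] at hc
  obtain ⟨r, hrm, hr, hrn⟩ := H (ε / (4 * (‖c * a‖ + 1))) (by positivity)
  refine ⟨r, hrm, hr, ?_⟩
  have e : r * x - x = r * (x - a * c * a) - (x - a * c * a) + (r * a - a) * (c * a) := by
    noncomm_ring
  have h1 : ‖r * (x - a * c * a)‖ ≤ 1 * (ε / 4) := by
    have hr1 : ‖r‖ ≤ 1 := by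
      rw [← Unitization.norm_inr (𝕜 := ℂ)]
      exact hr.inr.norm_le_one
    exact (norm_mul_le _ _).trans (mul_le_mul hr1 hc.le (norm_nonneg _) zero_le_one)
  have h2 : ‖(r * a - a) * (c * a)‖ ≤ ε / 4 := by
    refine (norm_mul_le _ _).trans ?_
    calc _ ≤ ε / (4 * (‖c * a‖ + 1)) * (‖c * a‖ + 1) :=
          mul_le_mul hrn (by linarith) (norm_nonneg _) (by positivity)
      _ = ε / 4 := by field_simp
  rw [e]
  have h3 := norm_add_le (r * (x - a * c * a) - (x - a * c * a)) ((r * a - a) * (c * a))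
  have h4 := norm_sub_le (r * (x - a * c * a)) (x - a * c * a)
  linarith

/-- A projection of the unitization which is almost under `e = k a = a k` can be perturbed into
`a B a`. -/
lemma exists_isProjection_inr_near {a e : B} {k p : Unitization ℂ B} (he : IsSelfAdjoint e)
    (hak : (e : Unitization ℂ B) = a * k) (hka : (e : Unitization ℂ B) = k * a)
    (hp : IsProjection p) {ε : ℝ} (hε : ε ≤ 1 / 300) (hpe : ‖p * (1 - e)‖ ≤ ε) :
    ∃ r ∈ herSub Set.univ a, IsProjection r ∧ ‖(r : Unitization ℂ B) - p‖ ≤ 27 * ε := by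
  set e' : Unitization ℂ B := (e : Unitization ℂ B) with he'
  have hes : IsSelfAdjoint e' := he.inr ℂ
  have hd : IsSelfAdjoint (e' * p * e') := by
    have := IsSelfAdjoint.conjugate (show IsSelfAdjoint p from hp.1) e'
    rwa [hes.star_eq] at this
  have hdp : ‖e' * p * e' - p‖ ≤ 3 * ε := by
    have h1 : star (p * (1 - e')) = (1 - e') * p := by
      rw [star_mul, star_sub, star_one, hes.star_eq, hp.1]
    have h2 : e' * p * e' - p =
        (1 - e') * p * (p * (1 - e')) - star (p * (1 - e')) - p * (1 - e') := by
      have h0 : (1 - e') * p * (p * (1 - e')) = (1 - e') * p * (1 - e') := by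
        rw [mul_assoc, ← mul_assoc p p, hp.2, ← mul_assoc]
      rw [h0, h1]
      noncomm_ring
    have h3 : ‖(1 - e') * p * (p * (1 - e'))‖ ≤ 1 * ε := by
      rw [← h1]
      refine (norm_mul_le _ _).trans (mul_le_mul ?_ hpe (norm_nonneg _) zero_le_one)
      rw [norm_star]
      linarith
    have h4 := norm_sub_le ((1 - e') * p * (p * (1 - e')) - star (p * (1 - e'))) (p * (1 - e'))
    have h5 := norm_sub_le ((1 - e') * p * (p * (1 - e'))) (star (p * (1 - e')))
    rw [norm_star] at h5
    rw [h2]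
    linarith
  obtain ⟨r, g, -, hr, hgd, hdg, -, hrp⟩ :=
    exists_isProjection_near hd hp (by linarith : 3 * ε ≤ 1 / 100) hdp
  set m : Unitization ℂ B := k * p * e' * g * g * e' * p * k with hm
  have hmf : (m.snd : Unitization ℂ B) = m := by
    conv_rhs => rw [← Unitization.inl_fst_add_inr_snd_eq m]
    simp [hm, he']
  have hra : r = ((a * m.snd * a : B) : Unitization ℂ B) := by
    rw [Unitization.inr_mul, Unitization.inr_mul, hmf, ← hr.2]
    nth_rewrite 1 [hdg]
    rw [hgd, hm]
    nth_rewrite 1 [hak]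
    nth_rewrite 3 [hka]
    simp only [mul_assoc]
  refine ⟨_, subset_closure ⟨m.snd, trivial, rfl⟩, ?_, ?_⟩
  · rw [hra] at hr
    refine ⟨Unitization.inr_injective (R := ℂ) ?_, Unitization.inr_injective (R := ℂ) ?_⟩
    · rw [Unitization.inr_star, hr.1]
    · rw [Unitization.inr_mul, hr.2]
  · rw [← hra]
    linarith

variable [PartialOrder B] [StarOrderedRing B]

lemma exists_isProjection_mem_herSub {A : NonUnitalStarSubalgebra ℂ B} (hA : IsClosed (A : Set B))
    (H : ∀ x y : Unitization ℂ B, x.snd ∈ A → y.snd ∈ A → 0 ≤ x → 0 ≤ y → x * y = 0 →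
      ∀ ε : ℝ, 0 < ε → ∃ p : Unitization ℂ B, IsProjection p ∧
        ‖p * x - x‖ ≤ ε ∧ ‖(1 - p) * y - y‖ ≤ ε) {a : B} (haA : a ∈ A) (ha : 0 ≤ a)
    {δ : ℝ} (hδ : 0 < δ) : ∃ r ∈ herSub Set.univ a, IsProjection r ∧ ‖r * a - a‖ ≤ δ := by
  set a' : Unitization ℂ B := (a : Unitization ℂ B) with ha'
  have ha0 : 0 ≤ a' := Unitization.inr_nonneg_iff.mpr ha
  set η := δ / 2 with hη
  have hη0 : 0 < η := half_pos hδ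
  have hX : cutdown a' η = ((cfcₙ (fun t : ℝ ↦ max (t - η) 0) a : B) : Unitization ℂ B) :=
    (Unitization.real_cfcₙ_eq_cfc_inr a _ (by simpa using hη0.le)).symm
  have he : ramp a' 0 η =
      ((cfcₙ (fun t : ℝ ↦ min (max (t - 0) 0 / η) 1) a : B) : Unitization ℂ B) :=
    (Unitization.real_cfcₙ_eq_cfc_inr a _ (by simp)).symm
  have heA : cfcₙ (fun t : ℝ ↦ min (max (t - 0) 0 / η) 1) a ∈ A := cfcₙ_mem (hs := hA) _ haA
  have hes : IsSelfAdjoint (cfcₙ (fun t : ℝ ↦ min (max (t - 0) 0 / η) 1) a) := cfcₙ_predicate _ _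
  generalize cfcₙ (fun t : ℝ ↦ min (max (t - 0) 0 / η) 1) a = e at he heA hes
  have hkc : Continuous fun t : ℝ ↦ (max t η)⁻¹ :=
    Continuous.inv₀ (by fun_prop) fun t ↦ (lt_max_of_lt_right hη0).ne'
  have hram : ∀ t ∈ spectrum ℝ a', min (max (t - 0) 0 / η) 1 = t * (max t η)⁻¹ := fun t ht ↦ by
    have ht0 := spectrum_nonneg_of_nonneg ha0 ht
    rw [sub_zero, max_eq_left ht0]
    rcases le_total t η with h | h
    · rw [max_eq_right h, min_eq_left (div_le_one_of_le₀ h hη0.le), div_eq_mul_inv]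
    · rw [max_eq_left h, min_eq_right ((one_le_div hη0).mpr h),
        mul_inv_cancel₀ (hη0.trans_le h).ne']
  have hak : (e : Unitization ℂ B) = a' * cfc (fun t : ℝ ↦ (max t η)⁻¹) a' := by
    nth_rewrite 1 [← cfc_id' ℝ a']
    rw [← he, ramp, ← cfc_mul (fun t : ℝ ↦ t) _ a' (by fun_prop) hkc.continuousOn]
    exact cfc_congr hram
  have hka : (e : Unitization ℂ B) = cfc (fun t : ℝ ↦ (max t η)⁻¹) a' * a' := by
    nth_rewrite 2 [← cfc_id' ℝ a']
    rw [← he, ramp, ← cfc_mul _ (fun t : ℝ ↦ t) a' hkc.continuousOn (by fun_prop)]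
    exact cfc_congr fun t ht ↦ (hram t ht).trans (mul_comm _ _)
  have hXa : ‖a' - cutdown a' η‖ ≤ η := by
    nth_rewrite 1 [← cfc_id' ℝ a']
    rw [cutdown, ← cfc_sub (fun t : ℝ ↦ t) _ a']
    refine norm_cfc_le hη0.le fun t ht ↦ ?_
    have ht0 := spectrum_nonneg_of_nonneg ha0 ht
    rw [Real.norm_eq_abs, abs_le]
    rcases le_total t η with h | h
    · rw [max_eq_right (by linarith)]
      constructor <;> linarith
    · rw [max_eq_left (by linarith)]
      constructor <;> linarith
  have hY : 0 ≤ 1 - ramp a' 0 η := by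
    have := (CStarAlgebra.norm_le_one_iff_of_nonneg _ (ramp_nonneg a' 0 hη0)).mp
      (norm_ramp_le_one a' 0 hη0)
    exact sub_nonneg.mpr this
  set M := ‖a'‖ + η + 1 with hM
  have hM0 : 0 < M := by positivity
  obtain ⟨p, hp, hpX, hpY⟩ := H (cutdown a' η) (1 - ramp a' 0 η)
    (by rw [hX]; exact cfcₙ_mem (hs := hA) _ haA)
    (by rw [he]; simpa [sub_eq_add_neg] using heA)
    (cfc_nonneg fun t _ ↦ le_max_right _ _) hY
    (by simpa using cutdown_mul_one_sub_ramp a' 0 hη0)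
    (min (1 / 300) (δ / (56 * M))) (by positivity)
  have hε : 28 * M * min (1 / 300) (δ / (56 * M)) ≤ δ / 2 := by
    have := min_le_right (1 / 300) (δ / (56 * M))
    rw [le_div_iff₀ (by positivity)] at this
    linarith
  have hε0 : 0 < min (1 / 300) (δ / (56 * M)) := by positivity
  set ε := min (1 / 300) (δ / (56 * M)) with hεdef
  have hpe : ‖p * (1 - (e : Unitization ℂ B))‖ ≤ ε := by
    have e1 : p * (1 - (e : Unitization ℂ B)) =
        -((1 - p) * (1 - (e : Unitization ℂ B)) - (1 - (e : Unitization ℂ B))) := by noncomm_ring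
    rw [e1, norm_neg, ← he]
    exact hpY
  obtain ⟨r, hrm, hr, hrp⟩ :=
    exists_isProjection_inr_near hes hak hka hp (min_le_left _ _) hpe
  refine ⟨r, hrm, hr, ?_⟩
  rw [← Unitization.norm_inr (𝕜 := ℂ), Unitization.inr_sub, Unitization.inr_mul, ← ha']
  set X := cutdown a' η with hXdef
  have e1 : (r : Unitization ℂ B) * a' - a' =
      (r - p) * X + (p * X - X) + -((1 - (r : Unitization ℂ B)) * (a' - X)) := by noncomm_ring
  have hXn : ‖X‖ ≤ M := by
    have := norm_sub_le a' (a' - X)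
    rw [sub_sub_cancel] at this
    linarith
  have h1 : ‖((r : Unitization ℂ B) - p) * X‖ ≤ 27 * ε * M :=
    (norm_mul_le _ _).trans (mul_le_mul hrp hXn (norm_nonneg _) (by positivity))
  have h2 : ‖(1 - (r : Unitization ℂ B)) * (a' - X)‖ ≤ 1 * η :=
    (norm_mul_le _ _).trans
      (mul_le_mul hr.inr.one_sub.norm_le_one hXa (norm_nonneg _) zero_le_one)
  have h3 := norm_add₃_le (a := (r - p) * X) (b := p * X - X)
    (c := -((1 - (r : Unitization ℂ B)) * (a' - X)))
  rw [norm_neg] at h3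
  have h4 : ε ≤ M * ε := le_mul_of_one_le_left hε0.le (by linarith [norm_nonneg a'])
  rw [e1]
  linarith

end NonUnital

theorem stmt1 {B : Type*} [NonUnitalCStarAlgebra B] [PartialOrder B] [StarOrderedRing B]
    (A : NonUnitalStarSubalgebra ℂ B) (hA : IsClosed (A : Set B)) :
    List.TFAE
      [InclusionRealRankZero (A : Set B) (Set.univ : Set B),
       -- (ii): self-adjoints in A approximated by self-adjoints in B with finite spectrum
       --       (spectrum computed in the unitization B†)
       ∀ a ∈ A, IsSelfAdjoint a → ∀ ε : ℝ, 0 < ε →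
         ∃ b : B, IsSelfAdjoint b ∧ (spectrum ℂ (b : Unitization ℂ B)).Finite ∧ ‖a - b‖ ≤ ε,
       -- (iii): self-adjoints in A† approximated by invertible self-adjoints in B†
       ∀ x : Unitization ℂ B, x.snd ∈ A → IsSelfAdjoint x → ∀ ε : ℝ, 0 < ε →
         ∃ y : Unitization ℂ B, IsSelfAdjoint y ∧ IsUnit y ∧ ‖x - y‖ ≤ ε,
       -- (iv): orthogonal positive elements of A† are separated by a projection in B†
       ∀ x y : Unitization ℂ B, x.snd ∈ A → y.snd ∈ A → 0 ≤ x → 0 ≤ y → x * y = 0 →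
         ∀ ε : ℝ, 0 < ε → ∃ p : Unitization ℂ B, IsProjection p ∧
           ‖p * x - x‖ ≤ ε ∧ ‖(1 - p) * y - y‖ ≤ ε] := by
  tfae_have 1 → 2 := fun h a ha has ε hε ↦ h.exists_finite_spectrum_near hA ha has hε
  tfae_have 2 → 3 := fun h x hxA hx ε hε ↦
    exists_isUnit_near_of_finite_spectrum_near hx
      (h x.snd hxA (by simpa [isSelfAdjoint_iff] using congrArg (fun x : Unitization ℂ B ↦ x.snd) hx.star_eq)) hε
  tfae_have 3 → 4 := fun h x y hxA hyA hx hy hxy ε hε ↦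
    exists_isProjection_separating hx hy hxy
      (h (x - y) (by
          rw [sub_eq_add_neg, Unitization.snd_add, Unitization.snd_neg, ← sub_eq_add_neg]
          exact sub_mem hxA hyA)
        ((IsSelfAdjoint.of_nonneg hx).sub (.of_nonneg hy))) hε
  tfae_have 4 → 1 := fun h a haA ha _ ↦ hasApproxUnitOfProjections_herSub fun δ hδ ↦
    exists_isProjection_mem_herSub hA h haA ha hδ
  tfae_finish
end

section
/- Let B be a C*-algebra, and let (A_n) and (B_n) be increasing sequences of closed *-subalgebras of B (A_n ⊆ A_{n+1} and B_n ⊆ B_{n+1} for all n) such that A_n ⊆ B_n for every n. Let A = cl(⋃_n A_n) and B' = cl(⋃_n B_n) be the norm closures of the unions, so that A ⊆ B'. If there exists N ∈ ℕ such that for every n > N the inclusion A_n ⊆ B_n has real rank zero, then the inclusion A ⊆ B' has real rank zero. -/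
open Filter Topology

section Projections

variable {B : Type*} [NonUnitalCStarAlgebra B]

lemma IsProjection.norm_le_one_s14 {q : B} (hq : IsProjection q) : ‖q‖ ≤ 1 :=
  IsStarProjection.norm_le q ⟨hq.2, hq.1⟩

lemma IsProjection.norm_mul_le {q : B} (hq : IsProjection q) (z : B) : ‖q * z‖ ≤ ‖z‖ :=
  (_root_.norm_mul_le q z).trans (mul_le_of_le_one_left (norm_nonneg z) hq.norm_le_one_s14)

lemma IsProjection.norm_mul_sub_le {q : B} (hq : IsProjection q) (z : B) :
    ‖q * z - z‖ ≤ 2 * ‖z‖ := by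
  linarith [norm_sub_le (q * z) z, hq.norm_mul_le z]

/-- If `b` is self-adjoint, then `‖(1 - q) b‖ ^ 2 ≤ 2 ‖(1 - q) b ^ 2‖`. -/
lemma IsProjection.sq_norm_mul_sub_le {q b : B} (hq : IsProjection q) (hb : star b = b) :
    ‖q * b - b‖ ^ 2 ≤ 2 * ‖q * (b * b) - b * b‖ := by
  have h1 : (q * b - b) * star (q * b - b) =
      star (q * star (q * (b * b) - b * b) - star (q * (b * b) - b * b)) := by
    simp only [star_sub, star_mul, hb, hq.1]
    noncomm_ring
  rw [sq, ← CStarRing.norm_self_mul_star, h1, norm_star]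
  exact (hq.norm_mul_sub_le _).trans_eq (by rw [norm_star])

/-- Inverting `star s * s` in the corner `q C q` when `s = s q` is close to `q` yields a projection
of the form `s y s*` which acts as a left unit on `s`. -/
lemma IsProjection.exists_projection_of_close {C : NonUnitalStarSubalgebra ℂ B}
    (hC : IsClosed (C : Set B)) {q s : B} (hq : IsProjection q) (hqC : q ∈ C) (hsC : s ∈ C)
    (hsq : s * q = s) (hs : ‖s - q‖ ≤ 1 / 4) :
    ∃ y ∈ C, IsProjection (s * y * star s) ∧ s * y * star s * s = s := by
  have hqs : q * star s = star s := by
    simpa [hq.1] using congrArg star hsq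
  set e : B := q - star s * s with he
  have heC : e ∈ C := sub_mem hqC (mul_mem (star_mem hsC) hsC)
  have hnorm : ‖e‖ ≤ 3 / 4 := by
    have h1 : e = -(star s * (s - q)) - star (s - q) * q := by
      simp only [he, star_sub, hq.1, mul_sub, sub_mul, hq.2]
      abel
    have hsn : ‖s‖ ≤ 5 / 4 := by
      have := norm_add_le (s - q) q
      rw [sub_add_cancel] at this
      linarith [hq.norm_le_one_s14]
    have h2 : ‖star s * (s - q)‖ ≤ 5 / 4 * (1 / 4) := by
      refine (_root_.norm_mul_le _ _).trans ?_
      rw [norm_star]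
      gcongr
    have h3 : ‖star (s - q) * q‖ ≤ 1 / 4 * 1 := by
      refine (_root_.norm_mul_le _ _).trans ?_
      rw [norm_star]
      gcongr
      exact hq.norm_le_one_s14
    rw [h1]
    refine (norm_sub_le _ _).trans ?_
    rw [norm_neg]
    linarith
  have hmaps : Set.MapsTo (fun y : B => q + e * y) (C : Set B) (C : Set B) :=
    fun y hy => add_mem hqC (mul_mem heC hy)
  have hcontr : ContractingWith (3 / 4) (hmaps.restrict _ _ _) := by
    refine ⟨by rw [← NNReal.coe_lt_coe]; norm_num, LipschitzWith.of_dist_le_mul fun x y => ?_⟩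
    rw [Subtype.dist_eq, Subtype.dist_eq, dist_eq_norm, dist_eq_norm]
    simp only [Set.MapsTo.val_restrict_apply, add_sub_add_left_eq_sub, ← mul_sub]
    refine (_root_.norm_mul_le _ _).trans ?_
    gcongr
    simpa using hnorm
  obtain ⟨y, hyC, hfix, -⟩ := hcontr.exists_fixedPoint' hC.isComplete hmaps hqC (edist_ne_top _ _)
  have hy : q + e * y = y := hfix
  have hqy : q * y = y := by
    have hqe : q * e = e := by
      simp only [he, mul_sub, hq.2, ← mul_assoc, hqs]
    rw [← hy, mul_add, hq.2, ← mul_assoc, hqe]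
  have hinv : star s * s * y = q := by
    have h1 : e * y = y - star s * s * y := by rw [he, sub_mul, hqy]
    rw [h1] at hy
    have h2 : q + (y - star s * s * y) - y = 0 := by rw [hy, sub_self]
    have h3 : q - star s * s * y = 0 := by rw [← h2]; abel
    exact (sub_eq_zero.mp h3).symm
  have hinv' : star y * (star s * s) = q := by
    simpa [hq.1, mul_assoc] using congrArg star hinv
  have hsa : star y = y := by
    have h1 : star y * q = star y := by simpa [hq.1] using congrArg star hqy
    calc star y = star y * (star s * s * y) := by rw [hinv, h1]
      _ = star y * (star s * s) * y := by simp only [mul_assoc]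
      _ = y := by rw [hinv', hqy]
  rw [hsa] at hinv'
  have hleft : s * y * star s * s = s := by
    calc s * y * star s * s = s * (y * (star s * s)) := by simp only [mul_assoc]
      _ = s := by rw [hinv', hsq]
  refine ⟨y, hyC, ⟨by simp [hsa, mul_assoc], ?_⟩, hleft⟩
  rw [← mul_assoc (s * y * star s), ← mul_assoc (s * y * star s), hleft]

/-- It suffices to find projections in `a S a` that almost act as a unit on `a`. -/
lemma hasApproxUnitOfProjections_herSub_s14 [PartialOrder B] {S : Set B} {a : B}
    (h : ∀ ε : ℝ, 0 < ε → ∃ d ∈ S, IsProjection (a * d * a) ∧ ‖a * d * a * a - a‖ ≤ ε) :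
    HasApproxUnitOfProjections (herSub S a) := by
  intro x hx _ ε hε
  obtain ⟨_, ⟨b, hb, rfl⟩, hxb⟩ := Metric.mem_closure_iff.mp hx (ε / 4) (by positivity)
  rw [dist_eq_norm] at hxb
  obtain ⟨d, hd, hp, hpa⟩ := h (ε / (4 * (‖b * a‖ + 1))) (by positivity)
  refine ⟨a * d * a, subset_closure ⟨d, hd, rfl⟩, hp, ?_⟩
  set p : B := a * d * a
  have h1 : p * x - x = (p * (x - a * b * a) - (x - a * b * a)) + (p * a - a) * (b * a) := by
    simp only [mul_sub, sub_mul, mul_assoc]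
    abel
  have h2 : ‖(p * a - a) * (b * a)‖ ≤ ε / 4 := by
    calc ‖(p * a - a) * (b * a)‖ ≤ ε / (4 * (‖b * a‖ + 1)) * (‖b * a‖ + 1) := by
          refine (norm_mul_le _ _).trans ?_
          gcongr
          linarith
      _ = ε / 4 := by field_simp
  rw [h1]
  linarith [norm_add_le (p * (x - a * b * a) - (x - a * b * a)) ((p * a - a) * (b * a)),
    hp.norm_mul_sub_le (x - a * b * a)]

lemma NonUnitalStarSubalgebra.exists_cutoff [PartialOrder B] [StarOrderedRing B]
    {C : NonUnitalStarSubalgebra ℂ B} (hC : IsClosed (C : Set B)) {b : B} (hbC : b ∈ C)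
    (hb : star b = b) {r : ℝ} (hr : 0 < r) :
    ∃ c ∈ C, ∃ g ∈ C, 0 ≤ c ∧ star g = g ∧ ‖g‖ ≤ 1 / r ∧ b * g * c = c ∧
      ‖b * b - c * c * c‖ ≤ r ^ 2 := by
  have hbs : IsSelfAdjoint b := hb
  set f : ℝ → ℝ := fun t => (max (t ^ 2 - r ^ 2) 0) ^ (1 / 3 : ℝ) with hf
  set k : ℝ → ℝ := fun t => t / max (t ^ 2) (r ^ 2) with hk
  have hpos : ∀ t : ℝ, 0 < max (t ^ 2) (r ^ 2) := fun t => lt_max_of_lt_right (by positivity)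
  have hfc : Continuous f :=
    Continuous.rpow_const (by fun_prop) fun t => Or.inr (by norm_num)
  have hkc : Continuous k := Continuous.div (by fun_prop) (by fun_prop) fun t => (hpos t).ne'
  have hf0 : f 0 = 0 := by
    have : max ((0 : ℝ) ^ 2 - r ^ 2) 0 = 0 := max_eq_right (by nlinarith)
    simp only [hf, this]
    norm_num
  have hk0 : k 0 = 0 := by simp [hk]
  have hf3 : ∀ t, f t * f t * f t = max (t ^ 2 - r ^ 2) 0 := fun t => by
    have h1 : f t * f t * f t = f t ^ 3 := by ring
    rw [h1, ← Real.rpow_natCast, hf, ← Real.rpow_mul (le_max_right _ _)]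
    norm_num
  have hid : cfcₙ (fun t : ℝ => t) b = b := cfcₙ_id' ℝ b
  refine ⟨cfcₙ f b, cfcₙ_mem (hs := hC) f hbC, cfcₙ k b, cfcₙ_mem (hs := hC) k hbC,
    cfcₙ_nonneg fun t _ => by positivity, (cfcₙ_predicate k b).star_eq, ?_, ?_, ?_⟩
  · refine norm_cfcₙ_le fun t _ => ?_
    rw [Real.norm_eq_abs, hk, abs_div, abs_of_pos (hpos t), div_le_div_iff₀ (hpos t) hr, one_mul]
    rcases le_total |t| r with h | h
    · exact le_max_of_le_right (by nlinarith)
    · exact le_max_of_le_left (by nlinarith [sq_abs t])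
  · nth_rewrite 1 [← hid]
    rw [← cfcₙ_mul _ _ b (by fun_prop) (by simp) hkc.continuousOn hk0,
      ← cfcₙ_mul _ _ b (by fun_prop) (by simp) hfc.continuousOn hf0]
    refine cfcₙ_congr fun t _ => ?_
    rcases le_total (t ^ 2) (r ^ 2) with h | h
    · have : f t = 0 := by
        simp only [hf, max_eq_right (sub_nonpos.mpr h)]
        norm_num
      simp [this]
    · have ht : t ≠ 0 := by
        rintro rfl
        nlinarith [pow_pos hr 2]
      simp only [hk, max_eq_left h]
      field_simp
  · nth_rewrite 1 2 [← hid]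
    rw [← cfcₙ_mul _ _ b (by fun_prop) (by simp) (by fun_prop) (by simp),
      ← cfcₙ_mul _ _ b hfc.continuousOn hf0 hfc.continuousOn hf0,
      ← cfcₙ_mul _ _ b (by fun_prop) (by simp [hf0]) hfc.continuousOn hf0,
      ← cfcₙ_sub _ _ b (by fun_prop) (by simp) (by fun_prop) (by simp [hf0])]
    refine norm_cfcₙ_le fun t _ => ?_
    rw [hf3, Real.norm_eq_abs, abs_le]
    rcases le_total (t ^ 2) (r ^ 2) with h | h
    · rw [max_eq_right (by linarith)]
      constructor <;> nlinarith
    · rw [max_eq_left (by linarith)]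
      constructor <;> nlinarith

variable [PartialOrder B] [StarOrderedRing B]

/-- A real rank zero inclusion `A ⊆ S` has projections in `S` that almost act as a unit on a given
self-adjoint `b ∈ A` and on which `b` is invertible with inverse of norm at most `1 / r`. -/
lemma InclusionRealRankZero.exists_projection {A S : NonUnitalStarSubalgebra ℂ B}
    (hA : IsClosed (A : Set B)) (hS : IsClosed (S : Set B)) (hAS : A ≤ S)
    (h : InclusionRealRankZero (A : Set B) (S : Set B)) {b : B} (hbA : b ∈ A) (hb : star b = b)
    {r : ℝ} (hr : 0 < r) :
    ∃ q ∈ S, ∃ g ∈ S, IsProjection q ∧ star g = g ∧ ‖g‖ ≤ 1 / r ∧ b * g * q = q ∧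
      ‖q * b - b‖ ≤ 3 * r := by
  obtain ⟨c, hcA, g, hgA, hc0, hg, hgn, hbgc, hcn⟩ :=
    NonUnitalStarSubalgebra.exists_cutoff hA hbA hb hr
  obtain ⟨q, hqS, hq, hbgq, hqc⟩ : ∃ q ∈ S, IsProjection q ∧ b * g * q = q ∧
      ‖q * (c * c * c) - c * c * c‖ < r ^ 2 := by
    rcases eq_or_ne c 0 with rfl | hne
    · exact ⟨0, zero_mem S, ⟨by simp, by simp⟩, by simp, by simpa using by positivity⟩
    · obtain ⟨q, hqher, hq, hqn⟩ := h c hcA hc0 hne (c * c * c)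
        (subset_closure ⟨c, hAS hcA, rfl⟩)
        (by simpa [(IsSelfAdjoint.of_nonneg hc0).star_eq] using star_left_conjugate_nonneg hc0 c)
        (r ^ 2) (by positivity)
      refine ⟨q, ?_, hq, ?_, hqn⟩
      · refine closure_minimal ?_ hS hqher
        rintro _ ⟨d, hd, rfl⟩
        exact mul_mem (mul_mem (hAS hcA) hd) (hAS hcA)
      · refine closure_minimal (t := {z : B | b * g * z = z}) ?_
          (isClosed_eq (by fun_prop) (by fun_prop)) hqher
        rintro _ ⟨d, hd, rfl⟩
        change b * g * (c * d * c) = c * d * c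
        rw [← mul_assoc, ← mul_assoc, hbgc]
  refine ⟨q, hqS, g, hAS hgA, hq, hg, hgn, hbgq, ?_⟩
  have h1 := hq.sq_norm_mul_sub_le hb
  have h2 : q * (b * b) - b * b =
      (q * (b * b - c * c * c) - (b * b - c * c * c)) + (q * (c * c * c) - c * c * c) := by
    rw [mul_sub]
    abel
  have h3 := norm_add_le (q * (b * b - c * c * c) - (b * b - c * c * c))
    (q * (c * c * c) - c * c * c)
  rw [← h2] at h3
  have h4 := hq.norm_mul_sub_le (b * b - c * c * c)
  refine le_of_sq_le_sq ?_ (by positivity)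
  nlinarith

/-- Approximating `a` by elements of subalgebras with real rank zero inclusions yields projections
in `a C a` that almost act as a unit on `a`. -/
lemma exists_projection_of_approx {C : NonUnitalStarSubalgebra ℂ B} (hC : IsClosed (C : Set B))
    {a : B} (haC : a ∈ C) (ha : star a = a)
    (happ : ∀ η : ℝ, 0 < η → ∃ A S : NonUnitalStarSubalgebra ℂ B, IsClosed (A : Set B) ∧
      IsClosed (S : Set B) ∧ A ≤ S ∧ S ≤ C ∧ InclusionRealRankZero (A : Set B) (S : Set B) ∧
      ∃ b ∈ A, star b = b ∧ ‖a - b‖ ≤ η)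
    {ε : ℝ} (hε : 0 < ε) :
    ∃ d ∈ C, IsProjection (a * d * a) ∧ ‖a * d * a * a - a‖ ≤ ε := by
  set r : ℝ := min (1 / 4) (ε / (2 * ‖a‖ + 11)) with hrdef
  have hM := norm_nonneg a
  have hr : 0 < r := lt_min (by norm_num) (by positivity)
  have hr4 : r ≤ 1 / 4 := min_le_left _ _
  have hrε : r * (2 * ‖a‖ + 11) ≤ ε := by
    rw [← le_div_iff₀ (by positivity)]
    exact min_le_right _ _
  obtain ⟨A, S, hA, hS, hAS, hSC, hrr, b, hbA, hb, hab⟩ := happ (r ^ 2) (by positivity)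
  obtain ⟨q, hqS, g, hgS, hq, hg, hgn, hbgq, hqb⟩ := hrr.exists_projection hA hS hAS hbA hb hr
  have hqC := hSC hqS
  have hgC := hSC hgS
  set s : B := a * g * q with hs
  have hsq : ‖s - q‖ ≤ r := by
    have h1 : s - q = (a - b) * g * q := by rw [sub_mul, sub_mul, hbgq]
    rw [h1]
    calc ‖(a - b) * g * q‖ ≤ ‖a - b‖ * ‖g‖ * ‖q‖ :=
          (norm_mul_le _ _).trans (by gcongr; exact norm_mul_le _ _)
      _ ≤ r ^ 2 * (1 / r) * 1 := by
          gcongr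
          exact hq.norm_le_one_s14
      _ = r := by field_simp
  obtain ⟨y, hyC, hp, hps⟩ := hq.exists_projection_of_close hC hqC
    (mul_mem (mul_mem haC hgC) hqC) (by rw [mul_assoc, hq.2] : s * q = s) (hsq.trans hr4)
  have hpa : s * y * star s = a * (g * q * y * (q * g)) * a := by
    simp only [hs, star_mul, ha, hg, hq.1, mul_assoc]
  refine ⟨g * q * y * (q * g),
    mul_mem (mul_mem (mul_mem hgC hqC) hyC) (mul_mem hqC hgC), hpa ▸ hp, ?_⟩
  rw [← hpa]
  set p : B := s * y * star s
  have hqa : ‖q * a - a‖ ≤ 3 * r + 2 * r ^ 2 := by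
    have h1 : q * a - a = (q * b - b) + (q * (a - b) - (a - b)) := by
      rw [mul_sub]
      abel
    rw [h1]
    linarith [norm_add_le (q * b - b) (q * (a - b) - (a - b)), hq.norm_mul_sub_le (a - b)]
  have h1 : p * a - a =
      (p * ((q - s) * a) - (q - s) * a) - (p * (q * a - a) - (q * a - a)) := by
    have : p * (s * a) = s * a := by rw [← mul_assoc, hps]
    simp only [mul_sub, sub_mul, this]
    abel
  have h2 : ‖(q - s) * a‖ ≤ r * ‖a‖ := by
    refine (norm_mul_le _ _).trans ?_
    rw [norm_sub_rev]
    gcongr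
  rw [h1]
  have h3 := norm_sub_le (p * ((q - s) * a) - (q - s) * a) (p * (q * a - a) - (q * a - a))
  nlinarith [hp.norm_mul_sub_le ((q - s) * a), hp.norm_mul_sub_le (q * a - a)]

end Projections

theorem stmt14 {B : Type*} [NonUnitalCStarAlgebra B] [PartialOrder B] [StarOrderedRing B]
    (An Bn : ℕ → NonUnitalStarSubalgebra ℂ B)
    (hAc : ∀ n, IsClosed ((An n : Set B))) (hBc : ∀ n, IsClosed ((Bn n : Set B)))
    (hAmono : ∀ n, (An n : Set B) ⊆ (An (n + 1) : Set B))
    (hBmono : ∀ n, (Bn n : Set B) ⊆ (Bn (n + 1) : Set B))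
    (hAB : ∀ n, (An n : Set B) ⊆ (Bn n : Set B))
    (N : ℕ) (h : ∀ n > N, InclusionRealRankZero (An n : Set B) (Bn n : Set B)) :
    InclusionRealRankZero (closure (⋃ n, (An n : Set B)))
      (closure (⋃ n, (Bn n : Set B))) := by
  have hA : Monotone An := monotone_nat_of_le_succ fun n => hAmono n
  have hB : Monotone Bn := monotone_nat_of_le_succ fun n => hBmono n
  set C : NonUnitalStarSubalgebra ℂ B := (⨆ n, Bn n).topologicalClosure
  have hCcoe : (C : Set B) = closure (⋃ n, (Bn n : Set B)) := by
    rw [← NonUnitalStarSubalgebra.coe_iSup_of_directed hB.directed_le]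
    rfl
  have hC : IsClosed (C : Set B) := NonUnitalStarSubalgebra.isClosed_topologicalClosure _
  intro a haA ha0 _
  have ha : star a = a := (IsSelfAdjoint.of_nonneg ha0).star_eq
  rw [← hCcoe]
  have haC : a ∈ C := by
    rw [← SetLike.mem_coe, hCcoe]
    exact closure_mono (Set.iUnion_mono hAB) haA
  refine hasApproxUnitOfProjections_herSub_s14 fun ε hε =>
    exists_projection_of_approx hC haC ha (fun η hη => ?_) hε
  obtain ⟨z, hz, hza⟩ := Metric.mem_closure_iff.mp haA η hη
  obtain ⟨n, hzn⟩ := Set.mem_iUnion.mp hz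
  rw [dist_eq_norm] at hza
  have hzm : z ∈ An (max n (N + 1)) := hA (le_max_left _ _) hzn
  refine ⟨An (max n (N + 1)), Bn (max n (N + 1)), hAc _, hBc _, hAB _,
    (le_iSup Bn _).trans (NonUnitalStarSubalgebra.le_topologicalClosure _),
    h _ (lt_max_of_lt_right N.lt_succ_self), (2⁻¹ : ℂ) • (z + star z),
    SMulMemClass.smul_mem _ (add_mem hzm (star_mem hzm)), by simp [add_comm], ?_⟩
  have h1 : a - (2⁻¹ : ℂ) • (z + star z) = (2⁻¹ : ℂ) • ((a - z) + star (a - z)) := by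
    rw [star_sub, ha]
    module
  have h3 : ‖(2⁻¹ : ℂ)‖ = 1 / 2 := by norm_num
  rw [h1, norm_smul, h3]
  have h2 := norm_add_le (a - z) (star (a - z))
  rw [norm_star] at h2
  linarith
end
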